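/- Let e ∈ 𝔞 be an idempotent and suppose B is e-admissible, i.e. for every b ∈ B either ebe = b or ebe = 0. Write Ā := eAe and 𝔞̄ := e𝔞e, and regard S^{Ā}(n,d) and T^{Ā}_{𝔞̄}(n,d) as subalgebras of S^A(n,d) via the (Ā,𝔞̄)-basis B̄ := {b ∈ B : ebe = b}. Then ξ^e S^A(n,d) ξ^e = S^{Ā}(n,d) and ξ^e T^A_𝔞(n,d) ξ^e = T^{Ā}_{𝔞̄}(n,d). -/

import Mathlib

open Finset

open scoped Classical TensorProduct

noncomputable section

namespace GS

/-- A *good pair* `(A, 𝔞)`: a `𝕜`-superalgebra `A = ev ⊕ od` which is free as a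
`𝕜`-supermodule, together with a subalgebra `𝔞 = aa ⊆ A₀` such that `𝔞` and `A/𝔞` are free,
a complement `𝔠 = cc` of `𝔞` in `A₀`, and an `(A,𝔞)`-basis `B = B_𝔞 ⊔ B_𝔠 ⊔ B_1`
(encoded by `bas : Basis β 𝕜 A` with the partition `part : β → Fin 3`,
where `0` = `B_𝔞`, `1` = `B_𝔠`, `2` = `B_1`). -/
structure GoodPair (𝕜 A β : Type) [CommRing 𝕜] [NonUnitalRing A] [Module 𝕜 A] : Type where
  ev : Submodule 𝕜 A
  od : Submodule 𝕜 A
  compl : IsCompl ev od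
  mul_ee : ∀ a ∈ ev, ∀ b ∈ ev, a * b ∈ ev
  mul_eo : ∀ a ∈ ev, ∀ b ∈ od, a * b ∈ od
  mul_oe : ∀ a ∈ od, ∀ b ∈ ev, a * b ∈ od
  mul_oo : ∀ a ∈ od, ∀ b ∈ od, a * b ∈ ev
  free_ev : Module.Free 𝕜 ev
  free_od : Module.Free 𝕜 od
  aa : Submodule 𝕜 A
  aa_le_ev : aa ≤ ev
  aa_mul : ∀ a ∈ aa, ∀ b ∈ aa, a * b ∈ aa
  free_aa : Module.Free 𝕜 aa
  free_quot : Module.Free 𝕜 (A ⧸ aa)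
  cc : Submodule 𝕜 A
  aa_inf_cc : aa ⊓ cc = ⊥
  aa_sup_cc : aa ⊔ cc = ev
  bas : Module.Basis β 𝕜 A
  part : β → Fin 3
  bas_mem_aa : ∀ i, part i = 0 → bas i ∈ aa
  bas_mem_cc : ∀ i, part i = 1 → bas i ∈ cc
  bas_mem_od : ∀ i, part i = 2 → bas i ∈ od

variable {𝕜 A β : Type} [CommRing 𝕜] [NonUnitalRing A] [Module 𝕜 A]

/-- An element is homogeneous if it lies in the even or the odd part. -/
def Homog (P : GoodPair 𝕜 A β) (a : A) : Prop := a ∈ P.ev ∨ a ∈ P.od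

/-- `H`, the set of nonzero homogeneous elements of `A`. -/
def Hset (P : GoodPair 𝕜 A β) : Set A := {a | Homog P a ∧ a ≠ 0}

/-- `⟨𝐚,𝐜⟩ = #{(k,l) : k > l, a_k odd, c_l odd}` (the Koszul sign count). -/
def koz (od : Submodule 𝕜 A) {d : ℕ} (a c : Fin d → A) : ℕ :=
  (univ.filter fun kl : Fin d × Fin d => kl.2 < kl.1 ∧ a kl.1 ∈ od ∧ c kl.2 ∈ od).card

/-- `⟨σ;𝐚⟩ = #{(k,l) : k < l, σ⁻¹k > σ⁻¹l, a_k and a_l odd}`. -/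
def sgnc (od : Submodule 𝕜 A) {d : ℕ} (σ : Equiv.Perm (Fin d)) (a : Fin d → A) : ℕ :=
  (univ.filter fun kl : Fin d × Fin d =>
    kl.1 < kl.2 ∧ σ⁻¹ kl.2 < σ⁻¹ kl.1 ∧ a kl.1 ∈ od ∧ a kl.2 ∈ od).card

/-- `⟨𝐚,𝐫,𝐬⟩ = #{(k,l) : k < l, a_k, a_l odd, (a_k,r_k,s_k) > (a_l,r_l,s_l)}` with respect to
the fixed total order `ord` on `A × [1,n] × [1,n]`. -/
def ang {n : ℕ} (od : Submodule 𝕜 A) (ord : LinearOrder (A × Fin n × Fin n))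
    {d : ℕ} (a : Fin d → A) (r s : Fin d → Fin n) : ℕ :=
  (univ.filter fun kl : Fin d × Fin d =>
    kl.1 < kl.2 ∧ a kl.1 ∈ od ∧ a kl.2 ∈ od ∧
      ord.lt (a kl.2, r kl.2, s kl.2) (a kl.1, r kl.1, s kl.1)).card

/-- `(𝐚,𝐫,𝐬) ∈ Tri^H(n,d)`: all entries are nonzero homogeneous, and a repeated entry
triple forces evenness. -/
def IsTriH (P : GoodPair 𝕜 A β) {n d : ℕ} (a : Fin d → A) (r s : Fin d → Fin n) : Prop :=
  (∀ k, a k ∈ Hset P) ∧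
    ∀ k l : Fin d, k ≠ l → (a k, r k, s k) = (a l, r l, s l) → a k ∈ P.ev

/-- `(𝐛,𝐫,𝐬) ∈ Tri^B(n,d)` for words of basis elements. -/
def IsTriB (P : GoodPair 𝕜 A β) {n d : ℕ} (b : Fin d → β) (r s : Fin d → Fin n) : Prop :=
  ∀ k l : Fin d, k ≠ l → ((b k, r k, s k) : β × Fin n × Fin n) = (b l, r l, s l) →
    P.part (b k) ≠ 2

/-- Minimal length representatives of the cosets `(S_e × S_f)\S_{e+f}`. -/
def IsShuffle (e f : ℕ) (σ : Equiv.Perm (Fin (e + f))) : Prop :=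
  (∀ k l : Fin (e + f), k < l → (l : ℕ) < e → σ⁻¹ k < σ⁻¹ l) ∧
  (∀ k l : Fin (e + f), k < l → e ≤ (k : ℕ) → σ⁻¹ k < σ⁻¹ l)

/-- The tower of superalgebras `M_n(A)^{⊗d}`, `d ≥ 0`, axiomatised.  `X a r s` is the pure
tensor `ξ^{a_1}_{r_1,s_1} ⊗ ⋯ ⊗ ξ^{a_d}_{r_d,s_d}` of matrix units; it is multilinear in the
`A`-entries, the pure tensors of basis elements form a basis, multiplication is the sign-twisted
(Koszul) componentwise one, `act` is the right action of the symmetric groups by superalgebra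
automorphisms, `evT/odT` is the induced supermodule structure, `star` is the `*`-(shuffle)
product and `nab` gives the components of the deconcatenation coproduct `∇`. -/
structure Tower (𝕜 A β : Type) [CommRing 𝕜] [NonUnitalRing A] [Module 𝕜 A]
    (n : ℕ) (T : ℕ → Type) [∀ e, NonUnitalRing (T e)] [∀ e, Module 𝕜 (T e)]
    (P : GoodPair 𝕜 A β) : Type where
  X : ∀ {e : ℕ}, (Fin e → A) → (Fin e → Fin n) → (Fin e → Fin n) → T e
  X_update_add : ∀ {e : ℕ} (a : Fin e → A) (r s : Fin e → Fin n) (k : Fin e) (x y : A),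
    X (Function.update a k (x + y)) r s
      = X (Function.update a k x) r s + X (Function.update a k y) r s
  X_update_smul : ∀ {e : ℕ} (a : Fin e → A) (r s : Fin e → Fin n) (k : Fin e) (c : 𝕜) (x : A),
    X (Function.update a k (c • x)) r s = c • X (Function.update a k x) r s
  bas : ∀ e : ℕ, Module.Basis ((Fin e → β) × (Fin e → Fin n) × (Fin e → Fin n)) 𝕜 (T e)
  bas_eq : ∀ (e : ℕ) (b : Fin e → β) (r s : Fin e → Fin n),
    bas e (b, r, s) = X (fun k => P.bas (b k)) r s
  X_mul : ∀ {e : ℕ} (a c : Fin e → A) (r s t u : Fin e → Fin n),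
    (∀ k, Homog P (a k)) → (∀ k, Homog P (c k)) →
    X a r s * X c t u
      = if s = t then ((-1 : ℤ) ^ koz P.od a c) • X (fun k => a k * c k) r u else 0
  act : ∀ {e : ℕ}, Equiv.Perm (Fin e) → T e →ₗ[𝕜] T e
  act_act : ∀ {e : ℕ} (σ τ : Equiv.Perm (Fin e)) (x : T e), act τ (act σ x) = act (σ * τ) x
  act_mul : ∀ {e : ℕ} (σ : Equiv.Perm (Fin e)) (x y : T e), act σ (x * y) = act σ x * act σ y
  act_X : ∀ {e : ℕ} (σ : Equiv.Perm (Fin e)) (a : Fin e → A) (r s : Fin e → Fin n),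
    (∀ k, Homog P (a k)) →
    act σ (X a r s) = ((-1 : ℤ) ^ sgnc P.od σ a) • X (a ∘ σ) (r ∘ σ) (s ∘ σ)
  evT : ∀ e : ℕ, Submodule 𝕜 (T e)
  odT : ∀ e : ℕ, Submodule 𝕜 (T e)
  complT : ∀ e : ℕ, IsCompl (evT e) (odT e)
  X_mem_evT : ∀ {e : ℕ} (a : Fin e → A) (r s : Fin e → Fin n), (∀ k, Homog P (a k)) →
    Even (univ.filter fun k => a k ∈ P.od).card → X a r s ∈ evT e
  X_mem_odT : ∀ {e : ℕ} (a : Fin e → A) (r s : Fin e → Fin n), (∀ k, Homog P (a k)) →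
    ¬ Even (univ.filter fun k => a k ∈ P.od).card → X a r s ∈ odT e
  star : ∀ {e f : ℕ}, T e →ₗ[𝕜] T f →ₗ[𝕜] T (e + f)
  star_X : ∀ {e f : ℕ} (a : Fin e → A) (r s : Fin e → Fin n)
      (c : Fin f → A) (t u : Fin f → Fin n),
    star (X a r s) (X c t u)
      = ∑ σ ∈ univ.filter (IsShuffle e f),
          act σ (X (Fin.append a c) (Fin.append r t) (Fin.append s u))
  nab : ∀ e f : ℕ, T (e + f) →ₗ[𝕜] TensorProduct 𝕜 (T e) (T f)
  nab_X : ∀ (e f : ℕ) (a : Fin (e + f) → A) (r s : Fin (e + f) → Fin n),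
    nab e f (X a r s)
      = (X (a ∘ Fin.castAdd f) (r ∘ Fin.castAdd f) (s ∘ Fin.castAdd f))
          ⊗ₜ[𝕜] (X (a ∘ Fin.natAdd e) (r ∘ Fin.natAdd e) (s ∘ Fin.natAdd e))

variable {n : ℕ} {T : ℕ → Type} [∀ e, NonUnitalRing (T e)] [∀ e, Module 𝕜 (T e)]

/-- `ξ^𝐚_{𝐫,𝐬}`, the signed sum of the pure tensors over the `S_d`-orbit of `(𝐚,𝐫,𝐬)`. -/
def xiH {P : GoodPair 𝕜 A β} (D : Tower 𝕜 A β n T P) (ord : LinearOrder (A × Fin n × Fin n))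
    {d : ℕ} (a : Fin d → A) (r s : Fin d → Fin n) : T d :=
  ∑ w ∈ (univ.image fun σ : Equiv.Perm (Fin d) => (a ∘ σ, r ∘ σ, s ∘ σ)),
    ((-1 : ℤ) ^ (ang P.od ord a r s + ang P.od ord w.1 w.2.1 w.2.2)) • D.X w.1 w.2.1 w.2.2

/-- `ξ^𝐛_{𝐫,𝐬}` for a word `𝐛` of basis elements. -/
def xiB {P : GoodPair 𝕜 A β} (D : Tower 𝕜 A β n T P) (ord : LinearOrder (A × Fin n × Fin n))
    {d : ℕ} (b : Fin d → β) (r s : Fin d → Fin n) : T d :=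
  xiH D ord (fun k => P.bas (b k)) r s

/-- `[𝐛,𝐫,𝐬]^b_{r,s}`, the multiplicity of an entry triple in a word triple. -/
def mco {n d : ℕ} (b : Fin d → β) (r s : Fin d → Fin n) (w : β × Fin n × Fin n) : ℕ :=
  (univ.filter fun k => ((b k, r k, s k) : β × Fin n × Fin n) = w).card

/-- `∏ ([𝐛,𝐫,𝐬]^b_{r,s})!` over the entry triples whose basis element satisfies `sel`
(e.g. `sel i = (part i = 1)` gives `[𝐛,𝐫,𝐬]^!_𝔠`). -/
def facSel (sel : β → Prop) {n d : ℕ} (b : Fin d → β) (r s : Fin d → Fin n) : ℕ :=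
  ∏ w ∈ ((univ.image fun k => ((b k, r k, s k) : β × Fin n × Fin n)).filter fun w => sel w.1),
    Nat.factorial (mco b r s w)

/-- `η^𝐛_{𝐫,𝐬} := [𝐛,𝐫,𝐬]^!_𝔠 • ξ^𝐛_{𝐫,𝐬}`. -/
def eta {P : GoodPair 𝕜 A β} (D : Tower 𝕜 A β n T P) (ord : LinearOrder (A × Fin n × Fin n))
    {d : ℕ} (b : Fin d → β) (r s : Fin d → Fin n) : T d :=
  facSel (fun i => P.part i = 1) b r s • xiB D ord b r s

/-- `S^A(n,d) = (M_n(A)^{⊗d})^{S_d}`, the invariants. -/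
def SchurS {P : GoodPair 𝕜 A β} (D : Tower 𝕜 A β n T P) (d : ℕ) : Submodule 𝕜 (T d) where
  carrier := {x | ∀ σ : Equiv.Perm (Fin d), D.act σ x = x}
  add_mem' := by
    intro x y hx hy σ
    rw [map_add, hx σ, hy σ]
  zero_mem' := by
    intro σ; exact map_zero _
  smul_mem' := by
    intro c x hx σ
    rw [map_smul, hx σ]

/-- The generalized Schur algebra `T^A_𝔞(n,d)`, the `𝕜`-span of the `η^𝐛_{𝐫,𝐬}`,
`(𝐛,𝐫,𝐬) ∈ Tri^B(n,d)`. -/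
def SchurT {P : GoodPair 𝕜 A β} (D : Tower 𝕜 A β n T P) (ord : LinearOrder (A × Fin n × Fin n))
    (d : ℕ) : Submodule 𝕜 (T d) :=
  Submodule.span 𝕜 {x | ∃ b r s, IsTriB P b r s ∧ x = eta D ord b r s}

/-- `S^𝔞(n,d) = (M_n(𝔞)^{⊗d})^{S_d} ⊆ S^A(n,d)`. -/
def SchurA {P : GoodPair 𝕜 A β} (D : Tower 𝕜 A β n T P) (d : ℕ) : Submodule 𝕜 (T d) :=
  Submodule.span 𝕜 {x | ∃ a r s, (∀ k, a k ∈ P.aa) ∧ x = D.X a r s} ⊓ SchurS D d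

/-- `ξ^f = E^f ⊗ ⋯ ⊗ E^f` for `f ∈ A`. -/
def xiIdem {P : GoodPair 𝕜 A β} (D : Tower 𝕜 A β n T P) (f : A) (d : ℕ) : T d :=
  ∑ r : Fin d → Fin n, D.X (fun _ => f) r r

/-- Transport along an equality of degrees. -/
def tcast {e f : ℕ} (h : e = f) : T e ≃ₗ[𝕜] T f := by
  subst h; exact LinearEquiv.refl 𝕜 (T e)

/-- Iterated `*`-product `x_1 * x_2 * ⋯ * x_d` of degree-one pure tensors read off from a
word (associated to the left). -/
def starIter {P : GoodPair 𝕜 A β} (D : Tower 𝕜 A β n T P) :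
    ∀ (e : ℕ), (Fin e → A) → (Fin e → Fin n) → (Fin e → Fin n) → T e
  | 0, _, _, _ => D.X Fin.elim0 Fin.elim0 Fin.elim0
  | (e + 1), a, r, s =>
      D.star (starIter D e (a ∘ Fin.castSucc) (r ∘ Fin.castSucc) (s ∘ Fin.castSucc))
        (D.X (fun _ : Fin 1 => a (Fin.last e)) (fun _ => r (Fin.last e)) (fun _ => s (Fin.last e)))

/-- Iterated `*`-product of blockwise given elements. -/
def starBlocks {P : GoodPair 𝕜 A β} (D : Tower 𝕜 A β n T P) :
    ∀ (q : ℕ) (sz : Fin q → ℕ), (∀ m, T (sz m)) → T (∑ m, sz m)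
  | 0, sz, _ => cast (congrArg T (Fin.sum_univ_zero sz).symm) (D.X Fin.elim0 Fin.elim0 Fin.elim0)
  | (q + 1), sz, x =>
      cast (congrArg T (Fin.sum_univ_castSucc sz).symm)
        (D.star (starBlocks D q (fun m => sz m.castSucc) (fun m => x m.castSucc))
          (x (Fin.last q)))

/-- Concatenation of a tuple of words of lengths `sz 0, …, sz (q-1)`. -/
def concatB {α : Type} : ∀ {q : ℕ} (sz : Fin q → ℕ), (∀ m, Fin (sz m) → α) → Fin (∑ m, sz m) → α
  | 0, sz, _ => fun k => Fin.elim0 (cast (congrArg Fin (Fin.sum_univ_zero sz)) k)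
  | (q + 1), sz, f => fun k =>
      Fin.append (concatB (fun m => sz m.castSucc) (fun m => f m.castSucc)) (f (Fin.last q))
        (cast (congrArg Fin (Fin.sum_univ_castSucc sz)) k)

/-- A triple of words `(𝐛,𝐫,𝐬)`. -/
abbrev WordTriple (β : Type) (n d : ℕ) : Type :=
  (Fin d → β) × (Fin d → Fin n) × (Fin d → Fin n)

/-- The diagonal right place-permutation action on triples of words. -/
def wAct {d : ℕ} (w : WordTriple β n d) (σ : Equiv.Perm (Fin d)) : WordTriple β n d :=
  (w.1 ∘ σ, w.2.1 ∘ σ, w.2.2 ∘ σ)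

/-- The `k`-th entry triple `(b_k, r_k, s_k)` (with `b_k` realized in `A`). -/
def entryAt (P : GoodPair 𝕜 A β) {n d : ℕ} (w : WordTriple β n d) (k : Fin d) :
    A × Fin n × Fin n :=
  (P.bas (w.1 k), w.2.1 k, w.2.2 k)

/-- The lexicographic order on triples of words induced by the total order `ord`. -/
def wordLE (P : GoodPair 𝕜 A β) {n : ℕ} (ord : LinearOrder (A × Fin n × Fin n)) {d : ℕ}
    (w w' : WordTriple β n d) : Prop :=
  (∀ k, entryAt P w k = entryAt P w' k) ∨
    ∃ l : Fin d, (∀ k, k < l → entryAt P w k = entryAt P w' k) ∧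
      ord.lt (entryAt P w l) (entryAt P w' l)

/-- `Tri^B_0(n,d)`: the lexicographically minimal representatives of the `S_d`-orbits on
`Tri^B(n,d)`. -/
def IsTri0 (P : GoodPair 𝕜 A β) {n : ℕ} (ord : LinearOrder (A × Fin n × Fin n)) {d : ℕ}
    (w : WordTriple β n d) : Prop :=
  IsTriB P w.1 w.2.1 w.2.2 ∧ ∀ σ : Equiv.Perm (Fin d), wordLE P ord w (wAct w σ)

/-- The first `l` letters of each word. -/
def firstW {d : ℕ} (l : ℕ) (hl : l ≤ d) (w : WordTriple β n d) : WordTriple β n l :=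
  (fun k => w.1 ⟨k, lt_of_lt_of_le k.isLt hl⟩,
   fun k => w.2.1 ⟨k, lt_of_lt_of_le k.isLt hl⟩,
   fun k => w.2.2 ⟨k, lt_of_lt_of_le k.isLt hl⟩)

/-- The last `d - l` letters of each word. -/
def lastW {d : ℕ} (l : ℕ) (hl : l ≤ d) (w : WordTriple β n d) : WordTriple β n (d - l) :=
  (fun k => w.1 ⟨l + (k : ℕ), by have := k.isLt; omega⟩,
   fun k => w.2.1 ⟨l + (k : ℕ), by have := k.isLt; omega⟩,
   fun k => w.2.2 ⟨l + (k : ℕ), by have := k.isLt; omega⟩)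

/-- Concatenation of words. -/
def appF {α : Type} {d : ℕ} (l : ℕ) (hl : l ≤ d) (f : Fin l → α) (g : Fin (d - l) → α) :
    Fin d → α :=
  fun k => if hk : (k : ℕ) < l then f ⟨k, hk⟩ else g ⟨(k : ℕ) - l, by have := k.isLt; omega⟩

/-- Concatenation `T¹T²` of two triples of words. -/
def concatW {d : ℕ} (l : ℕ) (hl : l ≤ d) (p : WordTriple β n l × WordTriple β n (d - l)) :
    WordTriple β n d :=
  (appF l hl p.1.1 p.2.1, appF l hl p.1.2.1 p.2.2.1, appF l hl p.1.2.2 p.2.2.2)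

/-- `Spl_l(T)`, the set of `l`-splits of `T ∈ Tri^B_0(n,d)`. -/
def splitsF (P : GoodPair 𝕜 A β) {n : ℕ} (ord : LinearOrder (A × Fin n × Fin n)) {d : ℕ}
    (l : ℕ) (hl : l ≤ d) (w : WordTriple β n d) :
    Finset (WordTriple β n l × WordTriple β n (d - l)) :=
  (univ.image fun σ : Equiv.Perm (Fin d) =>
      (firstW l hl (wAct w σ), lastW l hl (wAct w σ))).filter
    fun p => IsTri0 P ord p.1 ∧ IsTri0 P ord p.2

/-- The number of inversions (= Coxeter length) of a permutation. -/
def invCount {d : ℕ} (σ : Equiv.Perm (Fin d)) : ℕ :=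
  (univ.filter fun kl : Fin d × Fin d => kl.1 < kl.2 ∧ σ kl.2 < σ kl.1).card

/-- The submodule `{x | x·ε = x}` (for an idempotent `ε` this is `R·ε`). -/
def rfix (𝕜 : Type) {R : Type} [CommRing 𝕜] [NonUnitalRing R] [Module 𝕜 R]
    [IsScalarTower 𝕜 R R] (ε : R) : Submodule 𝕜 R where
  carrier := {x | x * ε = x}
  add_mem' := by
    intro x y hx hy
    simp only [Set.mem_setOf_eq] at *
    rw [add_mul, hx, hy]
  zero_mem' := by simp
  smul_mem' := by
    intro c x hx
    simp only [Set.mem_setOf_eq] at *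
    rw [smul_mul_assoc, hx]

/-- Right `εSε`-module endomorphism property for a map of `S·ε = M ⊓ rfix ε`,
where `S` is the (possibly non-unital) algebra realized as the submodule `M` of `R`. -/
def IsEquivar (𝕜 : Type) {R : Type} [CommRing 𝕜] [NonUnitalRing R] [Module 𝕜 R]
    [IsScalarTower 𝕜 R R] (M : Submodule 𝕜 R) (ε : R)
    (f : ↥(M ⊓ rfix 𝕜 ε) →ₗ[𝕜] ↥(M ⊓ rfix 𝕜 ε)) : Prop :=
  ∀ (x : ↥(M ⊓ rfix 𝕜 ε)) (c : R), c ∈ M → ε * c * ε = c →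
    ∀ h : (x : R) * c ∈ M ⊓ rfix 𝕜 ε,
      ((f ⟨(x : R) * c, h⟩ : ↥(M ⊓ rfix 𝕜 ε)) : R) = (f x : R) * c

/-- `ε` is a *double centralizer idempotent* for the algebra `M ⊆ R`: the left
multiplication map `λ : M → End_{εMε}(Mε)` is bijective. -/
def IsDCI (𝕜 : Type) {R : Type} [CommRing 𝕜] [NonUnitalRing R] [Module 𝕜 R]
    [IsScalarTower 𝕜 R R] (M : Submodule 𝕜 R) (ε : R) : Prop :=
  (∀ s ∈ M, ∀ s' ∈ M, (∀ x ∈ M ⊓ rfix 𝕜 ε, s * x = s' * x) → s = s') ∧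
  (∀ f : ↥(M ⊓ rfix 𝕜 ε) →ₗ[𝕜] ↥(M ⊓ rfix 𝕜 ε), IsEquivar 𝕜 M ε f →
    ∃ s ∈ M, ∀ x : ↥(M ⊓ rfix 𝕜 ε), (f x : R) = s * (x : R))

/-!
An even element `e` produces no Koszul signs, so `x ↦ ξ^e x ξ^e` replaces every entry `a_k` of a
pure tensor by `e a_k e`. When `e` is idempotent this map is a projection onto the span of the pure
tensors with entries in `eAe`, and it commutes with `S_d`; hence it cuts the invariants down to the
invariants in that span. For an `e`-admissible basis it fixes `η^𝐛_{𝐫,𝐬}` if all letters of `𝐛`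
are fixed by `b ↦ ebe`, and kills it otherwise, because every summand of `η^𝐛_{𝐫,𝐬}` is a
rearrangement of the same word.
-/

section LinearAlgebra

variable {R M : Type*} [Semiring R] [AddCommMonoid M] [Module R M]

theorem map_eq_inf_of_isProj {m N : Submodule R M} {f : M →ₗ[R] M} (hf : LinearMap.IsProj m f)
    (hN : ∀ x ∈ N, f x ∈ N) : N.map f = m ⊓ N := by
  ext y
  constructor
  · rintro ⟨x, hx, rfl⟩
    exact ⟨hf.map_mem x, hN x hx⟩
  · rintro ⟨hym, hyN⟩
    exact ⟨y, hyN, hf.map_id y hym⟩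

theorem map_span_eq_span_of_fixed_of_diff_eq_zero {s t : Set M} {f : M →ₗ[R] M} (hts : t ⊆ s)
    (hfix : ∀ x ∈ t, f x = x) (hzero : ∀ x ∈ s \ t, f x = 0) :
    (Submodule.span R s).map f = Submodule.span R t := by
  rw [Submodule.map_span]
  apply le_antisymm <;> rw [Submodule.span_le]
  · rintro _ ⟨x, hxs, rfl⟩
    by_cases hxt : x ∈ t
    · rw [hfix x hxt]
      exact Submodule.subset_span hxt
    · rw [hzero x ⟨hxs, hxt⟩]
      exact Submodule.zero_mem _
  · exact fun x hxt => Submodule.subset_span ⟨x, hts hxt, hfix x hxt⟩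

end LinearAlgebra

namespace GoodPair

theorem homog_bas (P : GoodPair 𝕜 A β) (i : β) : Homog P (P.bas i) := by
  have hpart : P.part i = 0 ∨ P.part i = 1 ∨ P.part i = 2 := by
    generalize P.part i = p
    fin_cases p <;> simp
  rcases hpart with h | h | h
  · exact Or.inl (P.aa_le_ev (P.bas_mem_aa i h))
  · exact Or.inl (P.aa_sup_cc ▸ Submodule.mem_sup_right (P.bas_mem_cc i h))
  · exact Or.inr (P.bas_mem_od i h)

-- `0` lies in `od`, hence counts as odd in `koz` and `sgnc`: words with a zero entry are set apart.
theorem exists_eq_zero_or_forall_notMem_od (P : GoodPair 𝕜 A β) {ι : Type*} {a : ι → A}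
    (ha : ∀ k, a k ∈ P.ev) : (∃ k, a k = 0) ∨ ∀ k, a k ∉ P.od := by
  rw [or_iff_not_imp_left, not_exists]
  exact fun hne k hk => hne k (Submodule.disjoint_def.mp P.compl.disjoint (a k) (ha k) hk)

end GoodPair

namespace Tower

variable {P : GoodPair 𝕜 A β} (D : Tower 𝕜 A β n T P) {d : ℕ}

section PureTensors

/-- The pure tensor `ξ^{a_1}_{r_1,s_1} ⊗ ⋯ ⊗ ξ^{a_d}_{r_d,s_d}` as a multilinear map in
`a_1, …, a_d`, with `r` and `s` fixed. -/
def multilinearX (r s : Fin d → Fin n) : MultilinearMap 𝕜 (fun _ : Fin d => A) (T d) where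
  toFun a := D.X a r s
  map_update_add' a k x y := by convert D.X_update_add a r s k x y
  map_update_smul' a k c x := by convert D.X_update_smul a r s k c x

theorem X_eq_zero {a : Fin d → A} (r s : Fin d → Fin n) (ha : ∃ k, a k = 0) : D.X a r s = 0 :=
  let ⟨k, hk⟩ := ha
  (D.multilinearX r s).map_coord_zero k hk

theorem X_mul_X_of_even_left {a c : Fin d → A} (r s t u : Fin d → Fin n)
    (ha : ∀ k, a k ∈ P.ev) (hc : ∀ k, Homog P (c k)) :
    D.X a r s * D.X c t u = if s = t then D.X (fun k => a k * c k) r u else 0 := by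
  rw [D.X_mul a c r s t u (fun k => Or.inl (ha k)) hc]
  congr 1
  rcases P.exists_eq_zero_or_forall_notMem_od ha with ⟨k, hk⟩ | hodd
  · rw [D.X_eq_zero r u ⟨k, by rw [hk, zero_mul]⟩, smul_zero]
  · have hkoz : koz P.od a c = 0 := by simp [koz, hodd]
    rw [hkoz, pow_zero, one_smul]

theorem X_mul_X_of_even_right {a c : Fin d → A} (r s t u : Fin d → Fin n)
    (ha : ∀ k, Homog P (a k)) (hc : ∀ k, c k ∈ P.ev) :
    D.X a r s * D.X c t u = if s = t then D.X (fun k => a k * c k) r u else 0 := by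
  rw [D.X_mul a c r s t u ha (fun k => Or.inl (hc k))]
  congr 1
  rcases P.exists_eq_zero_or_forall_notMem_od hc with ⟨k, hk⟩ | hodd
  · rw [D.X_eq_zero r u ⟨k, by rw [hk, mul_zero]⟩, smul_zero]
  · have hkoz : koz P.od a c = 0 := by simp [koz, hodd]
    rw [hkoz, pow_zero, one_smul]

theorem act_X_of_even (σ : Equiv.Perm (Fin d)) {a : Fin d → A} (r s : Fin d → Fin n)
    (ha : ∀ k, a k ∈ P.ev) : D.act σ (D.X a r s) = D.X (a ∘ σ) (r ∘ σ) (s ∘ σ) := by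
  rw [D.act_X σ a r s fun k => Or.inl (ha k)]
  rcases P.exists_eq_zero_or_forall_notMem_od ha with ⟨k, hk⟩ | hodd
  · rw [D.X_eq_zero _ _ ⟨σ⁻¹ k, by simpa using hk⟩, smul_zero]
  · have hsgn : sgnc P.od σ a = 0 := by simp [sgnc, hodd]
    rw [hsgn, pow_zero, one_smul]

end PureTensors

section XiIdem

variable {e : A}

theorem act_xiIdem (he : e ∈ P.ev) (σ : Equiv.Perm (Fin d)) :
    D.act σ (xiIdem D e d) = xiIdem D e d := by
  unfold xiIdem
  rw [map_sum]
  simp only [D.act_X_of_even σ _ _ fun _ => he]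
  exact Equiv.sum_comp (Equiv.arrowCongr σ.symm (Equiv.refl (Fin n)))
    fun r => D.X (fun _ => e) r r

theorem X_mul_xiIdem [IsScalarTower 𝕜 A A] [∀ m, IsScalarTower 𝕜 (T m) (T m)] (he : e ∈ P.ev)
    (a : Fin d → A) (r s : Fin d → Fin n) :
    D.X a r s * xiIdem D e d = D.X (fun k => a k * e) r s := by
  have hmultilinear :
      (LinearMap.mulRight 𝕜 (xiIdem D e d)).compMultilinearMap (D.multilinearX r s)
        = (D.multilinearX r s).compLinearMap fun _ => LinearMap.mulRight 𝕜 e := by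
    refine Module.Basis.ext_multilinear (fun _ => P.bas) fun b => ?_
    change D.X (fun k => P.bas (b k)) r s * ∑ t, D.X (fun _ => e) t t
      = D.X (fun k => P.bas (b k) * e) r s
    simp only [mul_sum, D.X_mul_X_of_even_right _ _ _ _ (fun k => P.homog_bas (b k)) fun _ => he,
      sum_ite_eq, mem_univ, if_true]
  exact congrArg (fun f => f a) hmultilinear

theorem xiIdem_mul_X [SMulCommClass 𝕜 A A] [∀ m, SMulCommClass 𝕜 (T m) (T m)] (he : e ∈ P.ev)
    (a : Fin d → A) (r s : Fin d → Fin n) :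
    xiIdem D e d * D.X a r s = D.X (fun k => e * a k) r s := by
  have hmultilinear :
      (LinearMap.mulLeft 𝕜 (xiIdem D e d)).compMultilinearMap (D.multilinearX r s)
        = (D.multilinearX r s).compLinearMap fun _ => LinearMap.mulLeft 𝕜 e := by
    refine Module.Basis.ext_multilinear (fun _ => P.bas) fun b => ?_
    change (∑ t, D.X (fun _ => e) t t) * D.X (fun k => P.bas (b k)) r s
      = D.X (fun k => e * P.bas (b k)) r s
    simp only [sum_mul, D.X_mul_X_of_even_left _ _ _ _ (fun _ => he) fun k => P.homog_bas (b k),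
      sum_ite_eq', mem_univ, if_true]
  exact congrArg (fun f => f a) hmultilinear

end XiIdem

section Compression

variable [∀ m, SMulCommClass 𝕜 (T m) (T m)] [∀ m, IsScalarTower 𝕜 (T m) (T m)] {e : A}

/-- The compression `x ↦ ξ^e (x ξ^e)` of `M_n(A)^{⊗d}` by `ξ^e`; its images of `S^A(n,d)` and
`T^A_𝔞(n,d)` are the truncations to be computed. -/
def compression (e : A) (d : ℕ) : T d →ₗ[𝕜] T d :=
  LinearMap.mulLeft 𝕜 (xiIdem D e d) ∘ₗ LinearMap.mulRight 𝕜 (xiIdem D e d)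

theorem compression_apply (x : T d) :
    D.compression e d x = xiIdem D e d * (x * xiIdem D e d) := rfl

theorem act_compression (he : e ∈ P.ev) (σ : Equiv.Perm (Fin d)) (x : T d) :
    D.act σ (D.compression e d x) = D.compression e d (D.act σ x) := by
  rw [compression_apply, compression_apply, D.act_mul, D.act_mul, D.act_xiIdem he]

theorem compression_mem_schurS (he : e ∈ P.ev) {x : T d} (hx : x ∈ SchurS D d) :
    D.compression e d x ∈ SchurS D d :=
  fun σ => by rw [D.act_compression he, hx σ]

variable [SMulCommClass 𝕜 A A] [IsScalarTower 𝕜 A A]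

theorem compression_X (he : e ∈ P.ev) (a : Fin d → A) (r s : Fin d → Fin n) :
    D.compression e d (D.X a r s) = D.X (fun k => e * a k * e) r s := by
  simp only [compression_apply, D.X_mul_xiIdem he, D.xiIdem_mul_X he, mul_assoc]

/-- `M_n(eAe)^{⊗d}`, realized inside `M_n(A)^{⊗d}` as the span of the pure tensors all of whose
entries have the form `eye`. -/
def cornerTensors (e : A) (d : ℕ) : Submodule 𝕜 (T d) :=
  Submodule.span 𝕜 {x | ∃ (a : Fin d → A) (r s : Fin d → Fin n),
    (∀ k, ∃ y : A, a k = e * y * e) ∧ x = D.X a r s}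

theorem compression_mem_cornerTensors (he : e ∈ P.ev) (x : T d) :
    D.compression e d x ∈ D.cornerTensors e d := by
  have hbasis : Submodule.span 𝕜 (Set.range (D.bas d))
      ≤ (D.cornerTensors e d).comap (D.compression e d) := by
    rw [Submodule.span_le]
    rintro _ ⟨⟨b, r, s⟩, rfl⟩
    rw [D.bas_eq, SetLike.mem_coe, Submodule.mem_comap, D.compression_X he]
    exact Submodule.subset_span ⟨_, r, s, fun k => ⟨P.bas (b k), rfl⟩, rfl⟩
  exact hbasis ((D.bas d).mem_span x)

theorem isProj_compression (he : e ∈ P.ev) (hidem : e * e = e) :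
    LinearMap.IsProj (D.cornerTensors e d) (D.compression e d) where
  map_mem := D.compression_mem_cornerTensors he
  map_id x hx := by
    refine LinearMap.eqOn_span (f := D.compression e d) (g := LinearMap.id) ?_ hx
    rintro _ ⟨a, r, s, ha, rfl⟩
    have hcorner : ∀ k, e * a k * e = a k := fun k => by
      obtain ⟨y, hy⟩ := ha k
      rw [hy, ← mul_assoc, ← mul_assoc, hidem, mul_assoc, hidem]
    rw [D.compression_X he, funext hcorner, LinearMap.id_apply]

theorem map_compression_schurS (he : e ∈ P.ev) (hidem : e * e = e) :
    (SchurS D d).map (D.compression e d) = D.cornerTensors e d ⊓ SchurS D d :=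
  map_eq_inf_of_isProj (D.isProj_compression he hidem) fun _ => D.compression_mem_schurS he

variable (ord : LinearOrder (A × Fin n × Fin n))

theorem compression_xiH_of_forall_eq (he : e ∈ P.ev) {a : Fin d → A} (r s : Fin d → Fin n)
    (ha : ∀ k, e * a k * e = a k) : D.compression e d (xiH D ord a r s) = xiH D ord a r s := by
  unfold xiH
  rw [map_sum]
  refine sum_congr rfl fun w hw => ?_
  obtain ⟨σ, -, rfl⟩ := mem_image.mp hw
  have hword : (fun k => e * (a ∘ σ) k * e) = a ∘ σ := funext fun k => ha (σ k)
  rw [map_zsmul, D.compression_X he, hword]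

theorem compression_xiH_of_exists_eq_zero (he : e ∈ P.ev) {a : Fin d → A} (r s : Fin d → Fin n)
    (ha : ∃ k, e * a k * e = 0) : D.compression e d (xiH D ord a r s) = 0 := by
  obtain ⟨k, hk⟩ := ha
  unfold xiH
  rw [map_sum]
  refine sum_eq_zero fun w hw => ?_
  obtain ⟨σ, -, rfl⟩ := mem_image.mp hw
  rw [map_zsmul, D.compression_X he, D.X_eq_zero _ _ ⟨σ⁻¹ k, by simpa using hk⟩, smul_zero]

theorem compression_eta_of_forall_eq (he : e ∈ P.ev) {b : Fin d → β} (r s : Fin d → Fin n)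
    (hb : ∀ k, e * P.bas (b k) * e = P.bas (b k)) :
    D.compression e d (eta D ord b r s) = eta D ord b r s := by
  rw [eta, map_nsmul, xiB, D.compression_xiH_of_forall_eq ord he r s hb]

theorem compression_eta_of_exists_eq_zero (he : e ∈ P.ev) {b : Fin d → β} (r s : Fin d → Fin n)
    (hb : ∃ k, e * P.bas (b k) * e = 0) : D.compression e d (eta D ord b r s) = 0 := by
  rw [eta, map_nsmul, xiB, D.compression_xiH_of_exists_eq_zero ord he r s hb, smul_zero]

theorem map_compression_schurT (he : e ∈ P.ev)
    (hadm : ∀ i : β, e * P.bas i * e = P.bas i ∨ e * P.bas i * e = 0) :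
    (SchurT D ord d).map (D.compression e d)
      = Submodule.span 𝕜 {x | ∃ (b : Fin d → β) (r s : Fin d → Fin n),
          IsTriB P b r s ∧ (∀ k, e * P.bas (b k) * e = P.bas (b k)) ∧ x = eta D ord b r s} := by
  refine map_span_eq_span_of_fixed_of_diff_eq_zero ?_ ?_ ?_
  · rintro _ ⟨b, r, s, hT, -, rfl⟩
    exact ⟨b, r, s, hT, rfl⟩
  · rintro _ ⟨b, r, s, -, hb, rfl⟩
    exact D.compression_eta_of_forall_eq ord he r s hb
  · rintro _ ⟨⟨b, r, s, hT, rfl⟩, hnot⟩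
    have hmoved : ∃ k, e * P.bas (b k) * e ≠ P.bas (b k) :=
      not_forall.mp fun hb => hnot ⟨b, r, s, hT, hb, rfl⟩
    obtain ⟨k, hk⟩ := hmoved
    exact D.compression_eta_of_exists_eq_zero ord he r s ⟨k, (hadm (b k)).resolve_left hk⟩

end Compression

end Tower

theorem statement12_general [SMulCommClass 𝕜 A A] [IsScalarTower 𝕜 A A]
    [∀ m, SMulCommClass 𝕜 (T m) (T m)] [∀ m, IsScalarTower 𝕜 (T m) (T m)]
    (P : GoodPair 𝕜 A β) (D : Tower 𝕜 A β n T P) (ord : LinearOrder (A × Fin n × Fin n))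
    (d : ℕ) (e : A) (he : e ∈ P.ev) (hidem : e * e = e) :
    (Submodule.map
        ((LinearMap.mulLeft 𝕜 (xiIdem D e d)) ∘ₗ (LinearMap.mulRight 𝕜 (xiIdem D e d)))
        (SchurS D d)
      = Submodule.span 𝕜 {x | ∃ (a : Fin d → A) (r s : Fin d → Fin n),
          (∀ k, ∃ y : A, a k = e * y * e) ∧ x = D.X a r s} ⊓ SchurS D d) ∧
    ((∀ i : β, e * P.bas i * e = P.bas i ∨ e * P.bas i * e = 0) →
      Submodule.map
        ((LinearMap.mulLeft 𝕜 (xiIdem D e d)) ∘ₗ (LinearMap.mulRight 𝕜 (xiIdem D e d)))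
        (SchurT D ord d)
      = Submodule.span 𝕜 {x | ∃ (b : Fin d → β) (r s : Fin d → Fin n),
          IsTriB P b r s ∧ (∀ k, e * P.bas (b k) * e = P.bas (b k)) ∧
          x = eta D ord b r s}) :=
  ⟨D.map_compression_schurS he hidem, D.map_compression_schurT ord he⟩

/-- Let `e ∈ 𝔞` be an idempotent with `B` `e`-admissible.  Then
`ξ^e S^A(n,d) ξ^e = S^{eAe}(n,d)` and `ξ^e T^A_𝔞(n,d) ξ^e = T^{eAe}_{e𝔞e}(n,d)`, where
`S^{eAe}(n,d)` is realized inside `S^A(n,d)` as the invariant part of the span of the pure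
tensors with entries in `eAe`, and `T^{eAe}_{e𝔞e}(n,d)` as the span of the `η^𝐛_{𝐫,𝐬}` over
triples in `Tri^{B̄}(n,d)`, `B̄ = {b ∈ B : ebe = b}`. -/
theorem statement12 {𝕜 A β : Type} [CommRing 𝕜] [IsDomain 𝕜] [CharZero 𝕜]
    [NonUnitalRing A] [Module 𝕜 A] [SMulCommClass 𝕜 A A] [IsScalarTower 𝕜 A A]
    {n : ℕ} (hn : 0 < n) {T : ℕ → Type} [∀ e, NonUnitalRing (T e)] [∀ e, Module 𝕜 (T e)]
    [∀ e, SMulCommClass 𝕜 (T e) (T e)] [∀ e, IsScalarTower 𝕜 (T e) (T e)]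
    (P : GoodPair 𝕜 A β) (D : Tower 𝕜 A β n T P) (ord : LinearOrder (A × Fin n × Fin n))
    (d : ℕ) (e : A) (he : e ∈ P.aa) (hidem : e * e = e)
    (hadm : ∀ i : β, e * P.bas i * e = P.bas i ∨ e * P.bas i * e = 0) :
    (Submodule.map
        ((LinearMap.mulLeft 𝕜 (xiIdem D e d)) ∘ₗ (LinearMap.mulRight 𝕜 (xiIdem D e d)))
        (SchurS D d)
      = Submodule.span 𝕜 {x | ∃ (a : Fin d → A) (r s : Fin d → Fin n),
          (∀ k, ∃ y : A, a k = e * y * e) ∧ x = D.X a r s} ⊓ SchurS D d) ∧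
    (Submodule.map
        ((LinearMap.mulLeft 𝕜 (xiIdem D e d)) ∘ₗ (LinearMap.mulRight 𝕜 (xiIdem D e d)))
        (SchurT D ord d)
      = Submodule.span 𝕜 {x | ∃ (b : Fin d → β) (r s : Fin d → Fin n),
          IsTriB P b r s ∧ (∀ k, e * P.bas (b k) * e = P.bas (b k)) ∧
          x = eta D ord b r s}) :=
  (statement12_general P D ord d e (P.aa_le_ev he) hidem).imp_right fun h => h hadm

end GS
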